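/- Let Φ ∈ ℝ^{m×n} have restricted isometry constant δ_{K+1} < 1 of order K+1, let x ∈ ℝ^n be K-sparse with support T, |T| = K ≥ 1, K + 1 ≤ n, and let y = Φx + v. Suppose that after k iterations (1 ≤ k < K) a run of OMP has selected only correct indices, i.e., T^k ⊆ T with |T^k| = k. Then v̄ := max_{i ∈ {1,…,n}\(T ∪ T^k)} |⟨φ_i, r^k⟩| satisfies v̄ ≤ δ_{K+1}·‖x_{T\T^k}‖₂ + √(1 + δ_1)·‖v‖₂, where x_{T\T^k} denotes the restriction of x to the indices in T\T^k and δ_1 is the restricted isometry constant of order 1. -/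

import Mathlib

noncomputable section
open Finset

/-- `Vec n` is `ℝ^n` with the Euclidean (ℓ²) norm. -/
abbrev Vec (n : ℕ) := EuclideanSpace ℝ (Fin n)

/-- The standard inner product `⟨u, v⟩ = ∑ i, u i * v i`. -/
def dot {n : ℕ} (u v : Vec n) : ℝ := ∑ i, u i * v i

/-- The `j`-th column of a matrix, as a Euclidean vector. -/
def col {m n : ℕ} (Φ : Matrix (Fin m) (Fin n) ℝ) (j : Fin n) : Vec m :=
  WithLp.toLp 2 fun i => Φ i j

/-- Matrix-vector multiplication `Φ x`, valued in Euclidean space. -/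
def mulVec' {m n : ℕ} (Φ : Matrix (Fin m) (Fin n) ℝ) (x : Vec n) : Vec m :=
  WithLp.toLp 2 fun i => ∑ j, Φ i j * x j

/-- The support of a vector, as a `Finset`. -/
def suppF {n : ℕ} (x : Vec n) : Finset (Fin n) :=
  Finset.univ.filter fun i => x i ≠ 0

/-- Restriction of a vector to an index set (zero outside the set). -/
def restrict {n : ℕ} (x : Vec n) (S : Finset (Fin n)) : Vec n :=
  WithLp.toLp 2 fun i => if i ∈ S then x i else 0

/-- `RIPConst Φ L δ` : δ is the restricted isometry constant of `Φ` of order `L`,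
i.e. the smallest `c ≥ 0` such that `(1-c)‖u‖² ≤ ‖Φu‖² ≤ (1+c)‖u‖²` for all
`L`-sparse `u`. -/
def RIPConst {m n : ℕ} (Φ : Matrix (Fin m) (Fin n) ℝ) (L : ℕ) (δ : ℝ) : Prop :=
  IsLeast {c : ℝ | 0 ≤ c ∧ ∀ u : Vec n, (suppF u).card ≤ L →
    (1 - c) * ‖u‖ ^ 2 ≤ ‖mulVec' Φ u‖ ^ 2 ∧ ‖mulVec' Φ u‖ ^ 2 ≤ (1 + c) * ‖u‖ ^ 2} δ

/-- Signal-to-noise ratio `‖Φx‖²/‖v‖²`. -/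
def SNR {m n : ℕ} (Φ : Matrix (Fin m) (Fin n) ℝ) (x : Vec n) (v : Vec m) : ℝ :=
  ‖mulVec' Φ x‖ ^ 2 / ‖v‖ ^ 2

/-- A run of `N` iterations of Orthogonal Matching Pursuit on data `(Φ, y)`:
`idx (k+1) = t^{k+1}` is the index selected at iteration `k+1`, `sets k = T^k`,
`est k = x^k` and `res k = r^k`. -/
structure OMPRun {m n : ℕ} (Φ : Matrix (Fin m) (Fin n) ℝ) (y : Vec m) (N : ℕ) where
  idx : ℕ → Fin n
  sets : ℕ → Finset (Fin n)
  est : ℕ → Vec n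
  res : ℕ → Vec m
  sets_zero : sets 0 = ∅
  est_zero : est 0 = 0
  res_zero : res 0 = y
  idx_not_mem : ∀ k < N, idx (k + 1) ∉ sets k
  idx_max : ∀ k < N, ∀ i : Fin n, i ∉ sets k →
    |dot (col Φ i) (res k)| ≤ |dot (col Φ (idx (k + 1))) (res k)|
  sets_succ : ∀ k < N, sets (k + 1) = insert (idx (k + 1)) (sets k)
  est_supp : ∀ k < N, suppF (est (k + 1)) ⊆ sets (k + 1)
  est_min : ∀ k < N, ∀ u : Vec n, suppF u ⊆ sets (k + 1) →
    ‖y - mulVec' Φ (est (k + 1))‖ ≤ ‖y - mulVec' Φ u‖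
  res_succ : ∀ k < N, res (k + 1) = y - mulVec' Φ (est (k + 1))

/-- The vector `Φᵀ w` restricted to an index set `A` (the vector of correlations
`⟨φ_i, w⟩` for `i ∈ A`, zero outside `A`), as a Euclidean vector. -/
def colDots {m n : ℕ} (Φ : Matrix (Fin m) (Fin n) ℝ) (A : Finset (Fin n)) (w : Vec m) : Vec n :=
  WithLp.toLp 2 fun i => if i ∈ A then dot (col Φ i) w else 0

/-- The vector `Φᵀ w` of all column correlations, as a plain function (so `‖·‖`
is the sup/ℓ∞ norm). -/
def dualVec {m n : ℕ} (Φ : Matrix (Fin m) (Fin n) ℝ) (w : Vec m) : Fin n → ℝ :=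
  fun i => dot (col Φ i) w

/-- `P⊥_S w` : the projection of `w` onto the orthogonal complement of the span
of the columns of `Φ` indexed by `S`. -/
def perpProj {m n : ℕ} (Φ : Matrix (Fin m) (Fin n) ℝ) (S : Finset (Fin n)) (w : Vec m) : Vec m :=
  w - (Submodule.orthogonalProjectionOnto (Submodule.span ℝ (col Φ '' (S : Set (Fin n)))) w : Vec m)

/-- The `j`-th largest value (1-indexed) among `{|x i| : i ∈ Γ}` (with
multiplicities); `0` if `j > |Γ|` or `j = 0`. -/
def kthLargest {n : ℕ} (x : Vec n) (Γ : Finset (Fin n)) (j : ℕ) : ℝ :=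
  if 1 ≤ j ∧ j ≤ Γ.card then
    (Multiset.sort (Γ.val.map fun i => |x i|) (· ≤ ·)).getD (Γ.card - j) 0
  else 0


theorem dot_eq_inner {n : ℕ} (u v : Vec n) : dot u v = inner ℝ u v := by
  simp [dot, PiLp.inner_apply, mul_comm]

/-- Matrix-vector multiplication as a linear map. -/
def mulLin {m n : ℕ} (Φ : Matrix (Fin m) (Fin n) ℝ) : Vec n →ₗ[ℝ] Vec m where
  toFun := mulVec' Φ
  map_add' u w := by
    ext i; simp [mulVec', mul_add, Finset.sum_add_distrib]
  map_smul' a u := by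
    ext i; simp [mulVec', Finset.mul_sum, mul_left_comm]

theorem mulLin_single {m n : ℕ} (Φ : Matrix (Fin m) (Fin n) ℝ) (i : Fin n) :
    mulLin Φ (EuclideanSpace.single i 1) = col Φ i := by
  ext j; simp [mulLin, mulVec', col, Pi.single_apply]

/-- Vectors supported in `S`. -/
def suppSub {n : ℕ} (S : Finset (Fin n)) : Submodule ℝ (Vec n) where
  carrier := {u | ∀ i, i ∉ S → u i = 0}
  zero_mem' := by intro i _; simp
  add_mem' := by
    intro a b ha hb i hi
    simp [ha i hi, hb i hi]
  smul_mem' := by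
    intro c a ha i hi
    simp [ha i hi]

theorem mem_suppSub {n : ℕ} {S : Finset (Fin n)} {u : Vec n} :
    u ∈ suppSub S ↔ ∀ i, i ∉ S → u i = 0 := Iff.rfl

theorem suppF_subset_iff {n : ℕ} {S : Finset (Fin n)} {u : Vec n} :
    suppF u ⊆ S ↔ u ∈ suppSub S := by
  rw [mem_suppSub]
  constructor
  · intro h i hi
    by_contra hc
    exact hi (h (by simp [suppF, hc]))
  · intro h i hi
    by_contra hc
    simp [suppF] at hi
    exact hi (h i hc)

theorem orth_of_supp {n : ℕ} {S S' : Finset (Fin n)} (hd : Disjoint S S') {u w : Vec n}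
    (hu : u ∈ suppSub S) (hw : w ∈ suppSub S') : inner ℝ u w = 0 := by
  rw [← dot_eq_inner]
  refine Finset.sum_eq_zero fun i _ => ?_
  by_cases h : i ∈ S
  · rw [hw i (Finset.disjoint_left.mp hd h), mul_zero]
  · rw [hu i h, zero_mul]

/-- Residual orthogonality from least squares. -/
theorem inner_zero_of_min {E : Type*} [NormedAddCommGroup E] [InnerProductSpace ℝ E]
    (r p : E) (h : ∀ a : ℝ, ‖r‖ ≤ ‖r - a • p‖) : inner ℝ p r = 0 := by
  have key : ∀ a : ℝ, 0 ≤ a ^ 2 * ‖p‖ ^ 2 - 2 * a * inner ℝ p r := by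
    intro a
    have h1 := pow_le_pow_left₀ (norm_nonneg _) (h a) 2
    rw [norm_sub_sq_real, norm_smul, inner_smul_right, real_inner_comm, mul_pow,
      Real.norm_eq_abs, sq_abs] at h1
    linarith
  by_cases hp : p = 0
  · simp [hp]
  have hp' : 0 < ‖p‖ ^ 2 := by positivity
  have h2 := key (inner ℝ p r / ‖p‖ ^ 2)
  have h3 : (inner ℝ p r / ‖p‖ ^ 2) ^ 2 * ‖p‖ ^ 2 - 2 * (inner ℝ p r / ‖p‖ ^ 2) * inner ℝ p r
      = - ((inner ℝ p r) ^ 2 / ‖p‖ ^ 2) := by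
    field_simp; ring
  rw [h3] at h2
  have h4 : (inner ℝ p r) ^ 2 / ‖p‖ ^ 2 ≤ 0 := by linarith
  have h5 : (inner ℝ p r) ^ 2 ≤ 0 := by
    by_contra hc
    push Not at hc
    have := div_pos hc hp'
    linarith
  nlinarith

set_option maxHeartbeats 1000000 in
/-- upper bound on `v̄ = max_{i ∉ T ∪ T^k} |⟨φ_i, r^k⟩|` when the
first `k` iterations of OMP selected only correct indices. -/
theorem stmt6 {m n K k : ℕ} (Φ : Matrix (Fin m) (Fin n) ℝ) (δK1 δ1 : ℝ)
    (x : Vec n) (v y : Vec m) (T : Finset (Fin n))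
    (hsupp : suppF x = T) (hcard : T.card = K) (hK1 : 1 ≤ K) (hn : K + 1 ≤ n)
    (hRIP : RIPConst Φ (K + 1) δK1) (hδ : δK1 < 1) (hRIP1 : RIPConst Φ 1 δ1)
    (hy : y = mulVec' Φ x + v)
    (hk1 : 1 ≤ k) (hkK : k < K)
    (run : OMPRun Φ y k)
    (hsub : run.sets k ⊆ T) (hcardk : (run.sets k).card = k) :
    ∀ i : Fin n, i ∉ T ∪ run.sets k →
      |dot (col Φ i) (run.res k)| ≤
        δK1 * ‖restrict x (T \ run.sets k)‖ + Real.sqrt (1 + δ1) * ‖v‖ := by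
  intro i hi
  rw [Finset.mem_union, not_or] at hi
  obtain ⟨hiT, hiS⟩ := hi
  obtain ⟨N, rfl⟩ : ∃ N, k = N + 1 := ⟨k - 1, by omega⟩
  have hres := run.res_succ N (by omega)
  have hes := run.est_supp N (by omega)
  have hmin := run.est_min N (by omega)
  rw [suppF_subset_iff] at hes
  generalize run.sets (N + 1) = S at *
  generalize run.est (N + 1) = z at *
  generalize run.res (N + 1) = r at *
  set L := mulLin Φ with hL
  have hLe : ∀ u, mulVec' Φ u = L u := fun u => rfl
  simp only [hLe] at hres hmin hy
  obtain ⟨⟨hδ0, hR⟩, -⟩ := hRIP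
  obtain ⟨⟨hδ10, hR1⟩, -⟩ := hRIP1
  simp only [hLe] at hR hR1
  set w := restrict x (T \ S) with hw
  have hwS : w ∈ suppSub (T \ S) := by
    intro j hj; simp only [hw, _root_.restrict, if_neg hj]
  have hxw : x - w ∈ suppSub S := by
    intro j hj
    by_cases hjT : j ∈ T
    · simp [hw, _root_.restrict, hjT, hj]
    · have hx0 : x j = 0 := by
        by_contra hc
        exact hjT (hsupp ▸ by simp [suppF, hc])
      simp [hw, _root_.restrict, hx0]
  have hrorth : ∀ u ∈ suppSub S, inner ℝ (L u) r = 0 := by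
    intro u hu
    refine inner_zero_of_min _ _ fun a => ?_
    have := hmin (z + a • u) (suppF_subset_iff.mpr
      (Submodule.add_mem _ hes (Submodule.smul_mem _ _ hu)))
    rw [hres]
    rwa [map_add, map_smul, ← sub_sub] at this
  set e : Vec n := EuclideanSpace.single i 1 with he
  have heS : e ∈ suppSub {i} := by
    intro j hj
    have : j ≠ i := by simpa using hj
    simp [he, this]
  have hne : ‖e‖ = 1 := by simp [he]
  set U := (suppSub S).map L with hU
  have hdec : ∀ b : Vec m, ∃ u ∈ suppSub S, ∀ u' ∈ suppSub S, inner ℝ (L u') (b - L u) = 0 := by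
    intro b
    obtain ⟨u, hu, hub⟩ := (Submodule.mem_map).1 (U.starProjection_apply_mem b)
    refine ⟨u, hu, fun u' hu' => ?_⟩
    rw [hub]
    have := U.sub_starProjection_mem_orthogonal b
    exact (Submodule.mem_orthogonal _ _).1 this _ (Submodule.mem_map_of_mem hu')
  obtain ⟨z1, hz1, hq⟩ := hdec (L e)
  obtain ⟨z2, hz2, hp⟩ := hdec (L w)
  set q := L e - L z1 with hqd
  set p := L w - L z2 with hpd
  have hcol : col Φ i = q + L z1 := by rw [← mulLin_single]; simp [hqd, he, hL]
  have hqr : dot (col Φ i) r = inner ℝ q p + inner ℝ q v := by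
    have h1 : r = p + v + L (x - w - z + z2) := by
      rw [hres, hy, hpd]; simp only [map_add, map_sub]; abel
    have h2 := hq (x - w - z + z2) (Submodule.add_mem _ (Submodule.sub_mem _ hxw hes) hz2)
    rw [real_inner_comm] at h2
    rw [dot_eq_inner, hcol, inner_add_left, hrorth _ hz1, add_zero, h1, inner_add_right, h2,
      inner_add_right, add_zero]
  have hqn : ‖q‖ ≤ Real.sqrt (1 + δ1) := by
    refine Real.le_sqrt_of_sq_le ?_
    have h1 := (hR1 e ((Finset.card_le_card (suppF_subset_iff.mpr heS)).trans (by simp))).2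
    have h2 : L e = q + L z1 := by simp [hqd]
    have h3 := hq z1 hz1
    rw [real_inner_comm] at h3
    rw [h2, norm_add_sq_real, h3, hne] at h1
    nlinarith [sq_nonneg ‖L z1‖]
  have hqv : |inner ℝ q v| ≤ Real.sqrt (1 + δ1) * ‖v‖ :=
    (abs_real_inner_le_norm q v).trans (mul_le_mul_of_nonneg_right hqn (norm_nonneg _))
  -- the key two-sided bound
  have hcardbound : ∀ u s : Vec n, u ∈ suppSub (insert i (T \ S)) → s ∈ suppSub S →
      (suppF (u + s)).card ≤ K + 1 := by
    intro u s hu hs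
    have : u + s ∈ suppSub (insert i T) := by
      intro j hj
      rw [Finset.mem_insert, not_or] at hj
      have h1 := hu j (by simp [hj.1, hj.2])
      have h2 := hs j (fun h => hj.2 (hsub h))
      simp [h1, h2]
    refine (Finset.card_le_card (suppF_subset_iff.mpr this)).trans ?_
    rw [← hcard]; exact Finset.card_insert_le _ _
  have hew : inner ℝ e w = 0 :=
    orth_of_supp (by simp [hiT]) heS hwS
  have hbound : ∀ a b : ℝ, (1 - δK1) * (a ^ 2 + b ^ 2 * ‖w‖ ^ 2) ≤ ‖a • q + b • p‖ ^ 2 ∧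
      ‖a • q + b • p‖ ^ 2 ≤ (1 + δK1) * (a ^ 2 + b ^ 2 * ‖w‖ ^ 2) := by
    intro a b
    have hu : a • e + b • w ∈ suppSub (insert i (T \ S)) := by
      intro j hj
      rw [Finset.mem_insert, not_or] at hj
      have h1 := heS j (by simp [hj.1])
      have h2 := hwS j hj.2
      simp [h1, h2]
    have hs : -(a • z1 + b • z2) ∈ suppSub S :=
      Submodule.neg_mem _ (Submodule.add_mem _ (Submodule.smul_mem _ _ hz1)
        (Submodule.smul_mem _ _ hz2))
    have hun : ‖a • e + b • w‖ ^ 2 = a ^ 2 + b ^ 2 * ‖w‖ ^ 2 := by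
      rw [norm_add_sq_real, inner_smul_left, inner_smul_right, hew, norm_smul, norm_smul, hne,
        mul_pow, mul_pow, Real.norm_eq_abs, Real.norm_eq_abs, sq_abs, sq_abs]
      ring
    have hLs : L ((a • e + b • w) + -(a • z1 + b • z2)) = a • q + b • p := by
      simp only [map_add, map_neg, map_smul, hqd, hpd, smul_sub]; abel
    constructor
    · have h1 := (hR _ (hcardbound _ _ hu hs)).1
      have hd : Disjoint (insert i (T \ S)) S := by
        rw [Finset.disjoint_insert_left]
        exact ⟨hiS, Finset.sdiff_disjoint⟩
      rw [hLs, norm_add_sq_real, orth_of_supp hd hu hs, hun] at h1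
      nlinarith [mul_nonneg (sub_nonneg.2 hδ.le) (sq_nonneg ‖-(a • z1 + b • z2)‖)]
    · have h1 := (hR _ (hcardbound _ 0 hu (Submodule.zero_mem _))).2
      have h2 : L (a • e + b • w + 0) = (a • q + b • p) + L (a • z1 + b • z2) := by
        simp only [map_add, map_zero, map_smul, hqd, hpd, smul_sub]; abel
      have h3 : inner ℝ (a • q + b • p) (L (a • z1 + b • z2)) = 0 := by
        have hs' : a • z1 + b • z2 ∈ suppSub S := by simpa using Submodule.neg_mem _ hs
        rw [real_inner_comm, inner_add_right, inner_smul_right, inner_smul_right,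
          hq _ hs', hp _ hs']
        simp
      rw [h2, norm_add_sq_real, h3, add_zero, hun] at h1
      nlinarith [sq_nonneg ‖L (a • z1 + b • z2)‖]
  have hpol : ∀ a : ℝ, 2 * a * inner ℝ q p ≤ δK1 * (a ^ 2 + ‖w‖ ^ 2) := by
    intro a
    have h1 := (hbound a 1).2
    have h2 := (hbound a (-1)).1
    rw [norm_add_sq_real, inner_smul_left, inner_smul_right] at h1 h2
    simp only [one_smul, neg_smul, norm_neg, conj_trivial] at h1 h2
    nlinarith
  have hqp : |inner ℝ q p| ≤ δK1 * ‖w‖ := by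
    by_cases hw0 : ‖w‖ = 0
    · have h1 := (hbound 0 1).2
      simp only [zero_smul, zero_add, one_smul, hw0] at h1
      have h2 : ‖p‖ = 0 := by
        have : ‖p‖ ^ 2 ≤ 0 := by simpa using h1
        nlinarith [norm_nonneg p]
      rw [norm_eq_zero] at h2
      simp [h2, hw0]
    · have hwp : 0 < ‖w‖ := lt_of_le_of_ne (norm_nonneg _) (Ne.symm hw0)
      rw [abs_le]
      constructor
      · have := hpol (-‖w‖)
        refine le_of_mul_le_mul_left ?_ hwp
        linarith
      · have := hpol ‖w‖
        refine le_of_mul_le_mul_left ?_ hwp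
        linarith
  rw [hqr]
  exact (abs_add_le _ _).trans (add_le_add hqp hqv)

end
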